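/- For every integer β with 3 ≤ β ≤ 7 and every nonnegative integer N, the equation x² + y² + z² + β(3t² − 2t) = N has an integer solution (x, y, z, t) ∈ ℤ⁴. That is, the quaternary mixed sums x²+y²+z²+βP₈(t) for 3 ≤ β ≤ 7 are universal. -/

import Mathlib

/-- Being a sum of three integer squares. -/
def S3 (n : ℤ) : Prop := ∃ x y z : ℤ, x ^ 2 + y ^ 2 + z ^ 2 = n

theorem exists_shear (u m : ℤ) (hm : 0 < m) : ∃ k : ℤ, -m ≤ 2 * (u + k * m) ∧ 2 * (u + k * m) ≤ m := by
  refine ⟨-((2 * u + m) / (2 * m)), ?_⟩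
  have h1 := Int.emod_add_mul_ediv (2 * u + m) (2 * m)
  have h2 := Int.emod_nonneg (2 * u + m) (show (2 * m) ≠ 0 by omega)
  have h3 := Int.emod_lt_of_pos (2 * u + m) (show 0 < 2 * m by omega)
  constructor <;> nlinarith

theorem form_red : ∀ (m l : ℕ) (a b c d e f : ℤ), a.toNat = m → (a * b - f ^ 2).toNat = l →
    0 < a → 0 < a * b - f ^ 2 →
    a * b * c + 2 * d * e * f - a * d ^ 2 - b * e ^ 2 - c * f ^ 2 = 1 →
    ∀ x y z : ℤ, S3 (a * x ^ 2 + b * y ^ 2 + c * z ^ 2 + 2 * d * y * z + 2 * e * x * z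
      + 2 * f * x * y) := by
  intro m
  induction m using Nat.strong_induction_on with
  | _ m IHm =>
  intro l
  induction l using Nat.strong_induction_on with
  | _ l IHl =>
  -- main step, once both off-diagonal terms are reduced
  have key : ∀ (a b c d e f : ℤ), a.toNat = m → (a * b - f ^ 2).toNat = l →
    0 < a → 0 < a * b - f ^ 2 →
    a * b * c + 2 * d * e * f - a * d ^ 2 - b * e ^ 2 - c * f ^ 2 = 1 →
    -(a * b - f ^ 2) ≤ 2 * (a * d - e * f) → 2 * (a * d - e * f) ≤ a * b - f ^ 2 →
    -a ≤ 2 * f → 2 * f ≤ a →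
    ∀ x y z : ℤ, S3 (a * x ^ 2 + b * y ^ 2 + c * z ^ 2 + 2 * d * y * z + 2 * e * x * z
      + 2 * f * x * y) := by
    intro a b c d e f hm hl ha hA hdet hB1 hB2 hf1 hf2 x y z
    have hid : (a * b - f ^ 2) * (a * c - e ^ 2) - (a * d - e * f) ^ 2 = a := by
      linear_combination a * hdet
    have hC : 0 < a * c - e ^ 2 := by
      by_contra hcon
      push Not at hcon
      nlinarith [mul_nonneg hA.le (sub_nonneg.2 hcon), sq_nonneg (a * d - e * f)]
    by_cases hCA : a * c - e ^ 2 < a * b - f ^ 2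
    · have := IHl (a * c - e ^ 2).toNat (by omega) a c b d f e hm rfl ha hC
        (by linear_combination hdet) x z y
      convert this using 1
      ring
    push Not at hCA
    have h1 : 3 * (a * b - f ^ 2) ^ 2 ≤ 4 * a := by
      generalize a * b - f ^ 2 = A at *
      generalize a * c - e ^ 2 = C at *
      generalize a * d - e * f = B at *
      nlinarith [mul_nonneg (sub_nonneg.2 hB2) (by linarith : (0:ℤ) ≤ 2 * B + A),
        mul_nonneg hA.le (sub_nonneg.2 hCA)]
    by_cases hba : b < a
    · have hb : 0 < b := by
        by_contra hcon
        push Not at hcon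
        nlinarith [mul_nonneg ha.le (sub_nonneg.2 hcon), sq_nonneg f]
      have := IHm b.toNat (by omega) _ b a c e d f rfl rfl hb (by linarith [mul_comm a b])
        (by linear_combination hdet) y x z
      convert this using 1
      ring
    push Not at hba
    have h2 : 3 * a ^ 2 ≤ 4 * (a * b - f ^ 2) := by
      nlinarith [mul_nonneg (sub_nonneg.2 hf2) (by linarith : (0:ℤ) ≤ 2 * f + a),
        mul_nonneg ha.le (sub_nonneg.2 hba)]
    have hA2 : a * b - f ^ 2 < 2 := by
      by_contra hcon
      push Not at hcon
      generalize a * b - f ^ 2 = A at *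
      have : 2 * a ≤ 3 * A := by
        by_contra h; push Not at h; nlinarith
      have h3 : A ≤ 2 := by nlinarith
      have : A = 2 := by omega
      subst this
      have : 3 ≤ a := by omega
      nlinarith
    have hA1 : a * b - f ^ 2 = 1 := by omega
    have ha1 : a = 1 := by
      have : a < 2 := by nlinarith
      omega
    subst ha1
    have hf0 : f = 0 := by omega
    subst hf0
    have hb1 : b = 1 := by linarith
    subst hb1
    have hd : d = 0 := by
      simp at hB1 hB2
      omega
    subst hd
    refine ⟨x + e * z, y, z, ?_⟩
    have : c = 1 + e ^ 2 := by linarith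
    subst this
    ring
  intro a b c d e f hm hl ha hA hdet x y z
  obtain ⟨k, hk1, hk2⟩ := exists_shear f a ha
  have hAeq : a * (b + 2 * k * f + k ^ 2 * a) - (f + k * a) ^ 2 = a * b - f ^ 2 := by ring
  obtain ⟨j, hj1, hj2⟩ := exists_shear (a * (d + k * e) - e * (f + k * a)) (a * b - f ^ 2) hA
  -- first y ↦ shear by k x, then z shear by j y
  have := key a (b + 2 * k * f + k ^ 2 * a)
    (c + 2 * j * (d + k * e) + j ^ 2 * (b + 2 * k * f + k ^ 2 * a))
    (d + k * e + j * (b + 2 * k * f + k ^ 2 * a)) (e + j * (f + k * a)) (f + k * a) hm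
    (by rw [hAeq, hl]) ha (by rw [hAeq]; exact hA) (by linear_combination hdet)
    (by rw [hAeq]; linarith) (by rw [hAeq]; linarith) (by linarith) (by linarith)
    (x - k * y) (y - j * z) z
  convert this using 1
  ring

theorem three_of_residue (n b r s : ℤ) (hb : 0 < b) (hbn : 0 < b * n - 1)
    (h : r ^ 2 + b = s * (b * n - 1)) : S3 n := by
  have hs : 0 < s := by
    by_contra hcon
    push Not at hcon
    nlinarith [mul_nonneg hbn.le (sub_nonneg.2 hcon), sq_nonneg r]
  have := form_red _ _ s (b * n - 1) n 0 1 r rfl rfl hs (by linarith)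
    (by linear_combination (-n) * h) 0 0 1
  simpa using this

theorem exists_root (p : ℕ) (hp : p.Prime) (b : ℤ) (h : jacobiSym (-b) p = 1) :
    ∃ r : ℤ, (p : ℤ) ∣ r ^ 2 + b := by
  have := Fact.mk hp
  obtain ⟨y, hy⟩ := ZMod.isSquare_of_jacobiSym_eq_one h
  refine ⟨y.val, ?_⟩
  rw [← ZMod.intCast_zmod_eq_zero_iff_dvd]
  push_cast
  rw [ZMod.natCast_zmod_val]
  push_cast at hy
  linear_combination -hy

theorem three_two_mod_four (n : ℕ) (hn : n % 4 = 2) : S3 n := by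
  have hcop : Nat.Coprime (n - 1) (4 * n) := by
    apply Nat.Coprime.mul_right
    · have : Nat.Coprime (n - 1) 2 := (Nat.coprime_two_right).2 (Nat.odd_iff.2 (by omega))
      exact this.pow_right 2
    · obtain ⟨m, rfl⟩ : ∃ m, n = m + 1 := ⟨n - 1, by omega⟩
      simp
  obtain ⟨p, hpn, hp, hmod⟩ := Nat.forall_exists_prime_gt_and_modEq (4 * n) (by omega) hcop
  obtain ⟨v, hv⟩ := (Nat.modEq_iff_dvd' (by omega)).1 hmod.symm
  have hpe : p + 1 = (4 * v + 1) * n := by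
    have : p = 4 * n * v + (n - 1) := by omega
    rw [this]
    have : n - 1 + 1 = n := by omega
    rw [add_assoc, this]; ring
  have hp4 : p % 4 = 1 := by
    have : p = 4 * (n * v) + (n - 1) := by rw [← mul_assoc]; omega
    omega
  have hb : (4 * v + 1) % 4 = 1 := by omega
  have hodd : Odd (4 * v + 1) := Nat.odd_iff.2 (by omega)
  have hj : jacobiSym (-((4 * v + 1 : ℕ) : ℤ)) p = 1 := by
    rw [jacobiSym.neg _ (Nat.odd_iff.2 (by omega)), ZMod.χ₄_nat_one_mod_four hp4, one_mul,
      jacobiSym.quadratic_reciprocity_one_mod_four hb (Nat.odd_iff.2 (by omega))]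
    have : jacobiSym (p : ℤ) (4 * v + 1) = jacobiSym (-1) (4 * v + 1) := by
      apply jacobiSym.mod_left'
      apply Int.ModEq.symm
      apply (Int.modEq_iff_dvd).2
      refine ⟨n, ?_⟩
      have : (p : ℤ) + 1 = ((4 * v + 1 : ℕ) : ℤ) * n := by exact_mod_cast hpe
      linarith
    rw [this, jacobiSym.at_neg_one hodd, ZMod.χ₄_nat_one_mod_four hb]
  obtain ⟨r, s, hr⟩ := exists_root p hp _ hj
  have hpe' : (p : ℤ) + 1 = ((4 * v + 1 : ℕ) : ℤ) * n := by exact_mod_cast hpe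
  have hp0 : (0 : ℤ) < p := by exact_mod_cast hp.pos
  refine three_of_residue n ((4 * v + 1 : ℕ) : ℤ) r s (by positivity) (by linarith) ?_
  rw [hr, ← hpe']; ring

theorem three_odd (n c : ℕ) (h : (n % 8 = 1 ∧ c = 3) ∨ (n % 8 = 3 ∧ c = 1) ∨ (n % 8 = 5 ∧ c = 3)) :
    S3 n := by
  obtain ⟨q, hq⟩ : ∃ q, c * n = 2 * q + 1 := ⟨c * n / 2, by rcases h with h | h | h <;> rw [h.2] <;> omega⟩
  have hqo : q % 2 = 1 := by rcases h with h | h | h <;> rw [h.2] at hq <;> omega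
  have hcop : Nat.Coprime q (4 * n) := by
    apply Nat.Coprime.mul_right
    · have : Nat.Coprime q 2 := (Nat.coprime_two_right).2 (Nat.odd_iff.2 hqo)
      exact this.pow_right 2
    · have h1 : IsCoprime (q : ℤ) (n : ℤ) := by
        refine ⟨-2, c, ?_⟩
        have : (c : ℤ) * n = 2 * q + 1 := by exact_mod_cast hq
        linarith
      exact Nat.isCoprime_iff_coprime.1 h1
  obtain ⟨p, hpn, hp, hmod⟩ := Nat.forall_exists_prime_gt_and_modEq (4 * n + q) (by omega) hcop
  obtain ⟨v, hv⟩ := (Nat.modEq_iff_dvd' (by omega)).1 hmod.symm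
  have hp1 : p = 4 * n * v + q := by omega
  have hpe : 2 * p + 1 = (8 * v + c) * n := by
    rw [hp1]; linear_combination -hq
  have hp4 : p % 4 = q % 4 := by
    have : p = 4 * (n * v) + q := by rw [← mul_assoc]; omega
    omega
  generalize hb : 8 * v + c = b at *
  have hpe' : 2 * (p : ℤ) + 1 = (b : ℤ) * n := by exact_mod_cast hpe
  have hpodd : Odd p := Nat.odd_iff.2 (by omega)
  have hb8 : b % 8 = 1 ∨ b % 8 = 3 := by omega
  have hodd : Odd b := Nat.odd_iff.2 (by omega)
  have hm2 : jacobiSym (-2) b = 1 := by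
    rw [jacobiSym.at_neg_two hodd, ZMod.χ₈'_nat_eq_if_mod_eight, if_neg (by omega), if_pos hb8]
  have hpb : jacobiSym (p : ℤ) b = 1 := by
    have h1 : jacobiSym (-2 * (p : ℤ)) b = jacobiSym 1 b := by
      apply jacobiSym.mod_left'
      apply Int.ModEq.symm
      apply (Int.modEq_iff_dvd).2
      exact ⟨-n, by linarith⟩
    rw [jacobiSym.mul_left, hm2, one_mul, jacobiSym.one_left] at h1
    exact h1
  have hj : jacobiSym (-(b : ℤ)) p = 1 := by
    rw [jacobiSym.neg _ hpodd]
    have hcase : p % 4 = 1 ∨ (p % 4 = 3 ∧ b % 4 = 3) := by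
      rcases h with h | h | h <;> rw [h.2] at hq hb <;> omega
    rcases hcase with h1 | ⟨h1, h2⟩
    · rw [ZMod.χ₄_nat_one_mod_four h1, one_mul,
        jacobiSym.quadratic_reciprocity_one_mod_four' hodd h1, hpb]
    · rw [ZMod.χ₄_nat_three_mod_four h1,
        jacobiSym.quadratic_reciprocity_three_mod_four h2 h1, hpb]
      norm_num
  obtain ⟨r0, hr0⟩ := exists_root p hp _ hj
  obtain ⟨r, hr, hr2⟩ : ∃ r : ℤ, (p : ℤ) ∣ r ^ 2 + b ∧ r % 2 = 1 := by
    rcases Int.emod_two_eq_zero_or_one r0 with h0 | h0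
    · refine ⟨r0 + p, ?_, by omega⟩
      have : (r0 + p) ^ 2 + (b : ℤ) = (r0 ^ 2 + b) + p * (2 * r0 + p) := by ring
      rw [this]
      exact dvd_add hr0 (dvd_mul_right _ _)
    · exact ⟨r0, hr0, h0⟩
  have h2 : (2 : ℤ) ∣ r ^ 2 + b := by
    have h3 : Odd (r ^ 2) := (Int.odd_iff.2 hr2).pow
    have h4 : Odd (b : ℤ) := by exact_mod_cast hodd
    exact (h3.add_odd h4).two_dvd
  have hcop2 : IsCoprime (2 : ℤ) (p : ℤ) := by
    have : Nat.Coprime 2 p := (Nat.coprime_two_left).2 hpodd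
    exact_mod_cast Nat.isCoprime_iff_coprime.2 this
  obtain ⟨s, hs⟩ := hcop2.mul_dvd h2 hr
  have hp0 : (0 : ℤ) < p := by exact_mod_cast hp.pos
  refine three_of_residue n (b : ℤ) r s (by omega) (by linarith) ?_
  rw [hs, ← hpe']; ring

theorem S3_four {n : ℤ} (h : S3 n) : S3 (4 * n) := by
  obtain ⟨x, y, z, h⟩ := h
  exact ⟨2 * x, 2 * y, 2 * z, by linear_combination 4 * h⟩

theorem S3_good (n : ℤ) (h0 : 0 ≤ n) (h : n % 4 = 2 ∨ n % 8 = 1 ∨ n % 8 = 3 ∨ n % 8 = 5) : S3 n := by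
  lift n to ℕ using h0
  rcases h with h | h | h | h
  · exact three_two_mod_four n (by omega)
  · exact three_odd n 3 (by omega)
  · exact three_odd n 1 (by omega)
  · exact three_odd n 3 (by omega)

theorem S3_or (n : ℕ) : S3 n ∨ ∃ a b : ℕ, n = 4 ^ a * (8 * b + 7) := by
  induction n using Nat.strong_induction_on with
  | _ n ih =>
  by_cases h : n % 4 = 0
  · obtain ⟨k, rfl⟩ := Nat.dvd_of_mod_eq_zero h
    rcases Nat.eq_zero_or_pos k with rfl | hk
    · exact Or.inl ⟨0, 0, 0, by simp⟩
    · rcases ih k (by omega) with h1 | ⟨a, b, h1⟩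
      · left; push_cast; exact S3_four h1
      · right; exact ⟨a + 1, b, by rw [h1, pow_succ]; ring⟩
  · by_cases h7 : n % 8 = 7
    · right; exact ⟨0, n / 8, by omega⟩
    · left; exact S3_good n (by omega) (by omega)

/-- Classification of possible exceptions. -/
theorem S3_cases (n : ℤ) (h0 : 0 ≤ n) : S3 n ∨ (∃ b, 0 ≤ b ∧ n = 8 * b + 7) ∨
    (∃ b, 0 ≤ b ∧ n = 4 * (8 * b + 7)) ∨ (∃ b, 0 ≤ b ∧ n = 16 * (8 * b + 7)) ∨
    (∃ k, 7 ≤ k ∧ n = 64 * k) := by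
  lift n to ℕ using h0
  rcases S3_or n with h | ⟨a, b, h⟩
  · exact Or.inl h
  right
  match a, h with
  | 0, h => left; exact ⟨b, by omega, by omega⟩
  | 1, h => right; left; exact ⟨b, by omega, by omega⟩
  | 2, h => right; right; left; exact ⟨b, by omega, by omega⟩
  | a + 3, h =>
    right; right; right
    refine ⟨4 ^ a * (8 * b + 7), ?_, ?_⟩
    · have : (1 : ℤ) ≤ 4 ^ a := one_le_pow₀ (by norm_num)
      nlinarith
    · rw [h]; push_cast; ring

theorem four_sq_not_three (M : ℕ) (hM : 0 < M) :
    ∃ a b c d : ℤ, a ^ 2 + b ^ 2 + c ^ 2 + d ^ 2 = M ∧ ¬ (3 : ℤ) ∣ a := by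
  induction M using Nat.strong_induction_on with
  | _ M ih =>
  obtain ⟨a, b, c, d, h⟩ := Nat.sum_four_squares M
  have h' : (a : ℤ) ^ 2 + (b : ℤ) ^ 2 + (c : ℤ) ^ 2 + (d : ℤ) ^ 2 = M := by exact_mod_cast h
  by_cases h1 : (3 : ℤ) ∣ a
  swap
  · exact ⟨a, b, c, d, h', h1⟩
  by_cases h2 : (3 : ℤ) ∣ b
  swap
  · exact ⟨b, a, c, d, by linarith, h2⟩
  by_cases h3 : (3 : ℤ) ∣ c
  swap
  · exact ⟨c, b, a, d, by linarith, h3⟩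
  by_cases h4 : (3 : ℤ) ∣ d
  swap
  · exact ⟨d, b, c, a, by linarith, h4⟩
  obtain ⟨a', ha⟩ := h1
  obtain ⟨b', hb⟩ := h2
  obtain ⟨c', hc⟩ := h3
  obtain ⟨d', hd⟩ := h4
  have h9 : (M : ℤ) = 9 * (a' ^ 2 + b' ^ 2 + c' ^ 2 + d' ^ 2) := by
    rw [← h', ha, hb, hc, hd]; ring
  obtain ⟨K, rfl⟩ : ∃ K, M = 9 * K := ⟨M / 9, by omega⟩
  obtain ⟨a, b, c, d, hK, h3⟩ := ih K (by omega) (by omega)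
  by_cases h5 : (3 : ℤ) ∣ a + 2 * b + 2 * c
  · refine ⟨a - 2 * b - 2 * c, 2 * a - b + 2 * c, 2 * a + 2 * b - c, 3 * d, ?_, by omega⟩
    push_cast; rw [← hK]; ring
  · refine ⟨a + 2 * b + 2 * c, 2 * a + b - 2 * c, 2 * a - 2 * b + c, 3 * d, ?_, h5⟩
    push_cast; rw [← hK]; ring

theorem finish {β N : ℤ} (t : ℤ) (h : S3 (N - β * (3 * t ^ 2 - 2 * t))) :
    ∃ x y z t : ℤ, x ^ 2 + y ^ 2 + z ^ 2 + β * (3 * t ^ 2 - 2 * t) = N := by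
  obtain ⟨x, y, z, h⟩ := h
  exact ⟨x, y, z, t, by linarith⟩

theorem universal_x2_y2_z2_betaP8 :
    ∀ β : ℤ, 3 ≤ β → β ≤ 7 → ∀ N : ℤ, 0 ≤ N →
      ∃ x y z t : ℤ,
        x ^ 2 + y ^ 2 + z ^ 2 + β * (3 * t ^ 2 - 2 * t) = N := by
  intro β h3 h7 N hN
  have hc : β = 3 ∨ β = 4 ∨ β = 5 ∨ β = 6 ∨ β = 7 := by omega
  rcases hc with rfl | rfl | rfl | rfl | rfl
  · obtain ⟨s, x, y, z, h, hs⟩ := four_sq_not_three (N.toNat + 1) (by omega)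
    have hN' : ((N.toNat + 1 : ℕ) : ℤ) = N + 1 := by omega
    rw [hN'] at h
    have : (∃ t, s = 3 * t - 1) ∨ ∃ t, s = -(3 * t - 1) := by
      have : s % 3 = 1 ∨ s % 3 = 2 := by omega
      rcases this with h | h
      · right; exact ⟨-(s / 3), by omega⟩
      · left; exact ⟨s / 3 + 1, by omega⟩
    rcases this with ⟨t, rfl⟩ | ⟨t, rfl⟩ <;> exact ⟨x, y, z, t, by linear_combination h⟩
  all_goals
    rcases S3_cases N hN with h | ⟨b, hb, rfl⟩ | ⟨b, hb, rfl⟩ | ⟨b, hb, rfl⟩ | ⟨b, hb, rfl⟩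
    · exact finish 0 (by simpa using h)
  -- β = 4
  · exact finish 1 (S3_good _ (by omega) (by omega))
  · refine finish 1 ?_
    have := S3_four (S3_good (8 * b + 6) (by omega) (by omega))
    convert this using 1; ring
  · refine finish 1 ?_
    have := S3_four (S3_good (4 * (8 * b + 7) - 1) (by omega) (by omega))
    convert this using 1; ring
  · refine finish (-1) ?_
    have := S3_four (S3_good (16 * b - 5) (by omega) (by omega))
    convert this using 1; ring
  -- β = 5
  · exact finish 1 (S3_good _ (by omega) (by omega))
  · exact finish (-1) (S3_good _ (by omega) (by omega))
  · exact finish 1 (S3_good _ (by omega) (by omega))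
  · exact finish 1 (S3_good _ (by omega) (by omega))
  -- β = 6
  · exact finish 1 (S3_good _ (by omega) (by omega))
  · exact finish 1 (S3_good _ (by omega) (by omega))
  · exact finish 1 (S3_good _ (by omega) (by omega))
  · exact finish 1 (S3_good _ (by omega) (by omega))
  -- β = 7
  · rcases S3_cases (8 * b) (by omega) with h | ⟨k, hk, h⟩ | ⟨k, hk, h⟩ | ⟨k, hk, h⟩ | ⟨k, hk, h⟩
    · refine finish 1 ?_
      convert h using 1; ring
    · omega
    · omega
    · refine finish (-1) ?_
      have := S3_four (S3_good (4 * (8 * k + 7) - 7) (by omega) (by omega))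
      convert this using 1; rw [h]; ring
    · refine finish (-1) ?_
      have := S3_four (S3_good (16 * k - 7) (by omega) (by omega))
      convert this using 1; rw [h]; ring
  · exact finish 1 (S3_good _ (by omega) (by omega))
  · exact finish 1 (S3_good _ (by omega) (by omega))
  · exact finish 1 (S3_good _ (by omega) (by omega))
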